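/- The n-step history-state value defined by the Bellman recursion equals the expected n-step discounted return over sampled trajectories: for all n, h, s, V n h s = Σ_τ trajPMF n (h,s) τ * Σ_{k < τ.length} γ^k * R (τ.get k).1 (τ.get k).2. (Consistency of the paper's recursive Bellman form, Eqs. 15–16, with the raw expected-return definition of v^π(h,s), Eq. 14.) -/

import Mathlib

namespace PMF

variable {α β : Type*}

/-- The real-valued probabilities of a `PMF` sum to one. -/
theorem hasSum_toReal (p : PMF α) : HasSum (fun x => (p x).toReal) 1 := by
  have h := ENNReal.hasSum_toReal p.tsum_coe_ne_top
  rwa [← ENNReal.tsum_toReal_eq p.apply_ne_top, p.tsum_coe, ENNReal.toReal_one] at h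

theorem sum_toReal [Fintype α] (p : PMF α) : ∑ x, (p x).toReal = 1 :=
  (hasSum_fintype _).unique p.hasSum_toReal

/-- The law of total expectation for a `PMF.bind` over a finite type. -/
theorem hasSum_bind_toReal_mul [Fintype α] (p : PMF α) (q : α → PMF β) (f : β → ℝ) {v : α → ℝ}
    (hq : ∀ a, HasSum (fun y => (q a y).toReal * f y) (v a)) :
    HasSum (fun y => (p.bind q y).toReal * f y) (∑ a, (p a).toReal * v a) := by
  have h := hasSum_sum (s := Finset.univ) fun a _ => (hq a).mul_left (p a).toReal
  refine h.congr_fun fun y => ?_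
  rw [bind_apply, tsum_fintype, ENNReal.toReal_sum
    fun a _ => ENNReal.mul_ne_top (p.apply_ne_top a) ((q a).apply_ne_top y), Finset.sum_mul]
  simp only [ENNReal.toReal_mul, mul_assoc]

/-- Change of variables for the expectation under the image of a `PMF` by an injective map. -/
theorem hasSum_map_toReal_mul (p : PMF α) {g : α → β} (hg : g.Injective) (f : β → ℝ) {v : ℝ}
    (h : HasSum (fun x => (p x).toReal * f (g x)) v) :
    HasSum (fun y => (p.map g y).toReal * f y) v := by
  classical
  rw [← hg.hasSum_iff]
  · refine h.congr_fun fun x => ?_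
    simp [map_apply, hg.eq_iff]
  · intro y hy
    have : p.map g y = 0 := by
      rw [apply_eq_zero_iff, support_map]
      rintro ⟨x, -, rfl⟩
      exact hy ⟨x, rfl⟩
    simp [this]

end PMF

/-- The n-step history-state value defined by the Bellman recursion equals
the expected n-step discounted return over sampled trajectories. -/
theorem bellman_value_eq_expected_return
    {S A O : Type*} [Fintype S] [Fintype A] [Fintype O]
    [Nonempty S] [Nonempty A] [Nonempty O]
    (T : S → A → PMF S) (Z : S → PMF O) (R : S → A → ℝ)
    (γ : ℝ) (hγ0 : 0 ≤ γ) (hγ1 : γ < 1)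
    (π : List (A × O) → PMF A)
    (V : ℕ → List (A × O) → S → ℝ)
    (hV0 : ∀ h s, V 0 h s = 0)
    (hV : ∀ n h s, V (n + 1) h s =
      ∑ a : A, (π h a).toReal *
        (R s a + γ * ∑ s' : S, (T s a s').toReal *
          ∑ o : O, (Z s' o).toReal * V n (h ++ [(a, o)]) s'))
    (trajPMF : ℕ → List (A × O) × S → PMF (List (S × A)))
    (hT0 : ∀ hs, trajPMF 0 hs = PMF.pure [])
    (hT : ∀ (n : ℕ) (h : List (A × O)) (s : S),
      trajPMF (n + 1) (h, s) =
        (π h).bind fun a =>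
          (T s a).bind fun s' =>
            (Z s').bind fun o =>
              (trajPMF n (h ++ [(a, o)], s')).bind fun rest =>
                PMF.pure ((s, a) :: rest)) :
    ∀ (n : ℕ) (h : List (A × O)) (s : S),
      V n h s =
        ∑' τ : List (S × A),
          (trajPMF n (h, s) τ).toReal *
            ∑ k : Fin τ.length,
              γ ^ (k : ℕ) * R (τ.get k).1 (τ.get k).2 := by
  intro n
  let G : List (S × A) → ℝ := fun τ =>
    ∑ k : Fin τ.length, γ ^ (k : ℕ) * R (τ.get k).1 (τ.get k).2
  have hG : ∀ s a τ, G ((s, a) :: τ) = R s a + γ * G τ := fun s a τ => by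
    simp [G, Fin.sum_univ_succ, Finset.mul_sum, pow_succ', mul_assoc]
  suffices H : ∀ h s, HasSum (fun τ => (trajPMF n (h, s) τ).toReal * G τ) (V n h s) from
    fun h s => (H h s).tsum_eq.symm
  induction n with
  | zero =>
    intro h s
    rw [hV0]
    refine HasSum.congr_fun hasSum_zero fun τ => ?_
    cases τ <;> simp [hT0, G]
  | succ n ih =>
    intro h s
    have hrest : ∀ a s' o, HasSum
        (fun τ => (((trajPMF n (h ++ [(a, o)], s')).map ((s, a) :: ·)) τ).toReal * G τ)
        (R s a + γ * V n (h ++ [(a, o)]) s') := fun a s' o => by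
      refine PMF.hasSum_map_toReal_mul _ List.cons_injective _ ?_
      have key := ((trajPMF n (h ++ [(a, o)], s')).hasSum_toReal.mul_left (R s a)).add
        ((ih (h ++ [(a, o)]) s').mul_left γ)
      rw [mul_one] at key
      refine key.congr_fun fun τ => ?_
      rw [hG]
      ring
    have key := (π h).hasSum_bind_toReal_mul _ G fun a =>
      (T s a).hasSum_bind_toReal_mul _ G fun s' =>
        (Z s').hasSum_bind_toReal_mul _ G fun o => hrest a s' o
    rw [hT, hV]
    refine Eq.subst (motive := HasSum _) ?_ key
    refine Finset.sum_congr rfl fun a _ => ?_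
    simp only [mul_add, Finset.sum_add_distrib, ← Finset.sum_mul, PMF.sum_toReal, one_mul,
      mul_left_comm _ γ, ← Finset.mul_sum]
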